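/- Let k be a field, R = k[x_1,…,x_d], T = k[y_1,…,y_n], and B = R ⊗_k T, bigraded by bideg x_i = (1,0) and bideg y_j = (0,1). Let f_1,…,f_d be a B-regular sequence of bihomogeneous elements contained in m = (x_1,…,x_d)B, set I = (f_1,…,f_d), S = B/I, δ = (Σα_i) − d, τ = Σβ_i where bideg f_i = (α_i,β_i), and A = H^0_m(S). Let 𝔅 be any d×d matrix of bihomogeneous elements of B with [f_1 … f_d] = [x_1 … x_d]·𝔅. Then det 𝔅 ∉ I, det 𝔅 is a bihomogeneous form of bidegree (δ,τ) modulo I, I : (x_1,…,x_d) = I + (det 𝔅), and the T-module A_δ is generated by the image of det 𝔅. -/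

import Mathlib

/-!
STATEMENT 4: With `B = k[x_1,…,x_d] ⊗_k k[y_1,…,y_n]` bigraded as usual,
`f_1,…,f_d ⊆ m = (x_1,…,x_d)B` a bihomogeneous `B`-regular sequence with
`bideg f_i = (α_i, β_i)`, `I = (f_1,…,f_d)`, `S = B/I`, `δ = (Σα_i) − d`, `τ = Σβ_i`,
`A = H⁰_m(S)`, and `𝔅` a `d×d` matrix of bihomogeneous elements of `B` with
`[f_1 … f_d] = [x_1 … x_d]·𝔅`: then `det 𝔅 ∉ I`, `det 𝔅` is bihomogeneous of bidegree
`(δ,τ)`, `I : (x_1,…,x_d) = I + (det 𝔅)`, and the `T`-module `A_δ` is generated by the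
image of `det 𝔅`.
-/

open MvPolynomial

noncomputable section

namespace Stmt4

variable (k : Type) [Field k] (d n : ℕ)

/-- `B = R ⊗_k T = k[x_1,…,x_d,y_1,…,y_n]`. -/
abbrev B := MvPolynomial (Fin d ⊕ Fin n) k

/-- `T = k[y_1,…,y_n]`. -/
abbrev T := MvPolynomial (Fin n) k

/-- `B` is a `T`-algebra via `y_j ↦ y_j`. -/
instance : Algebra (T k n) (B k d n) :=
  ((rename Sum.inr : T k n →ₐ[k] B k d n).toRingHom).toAlgebra

/-- The bigrading weight: `bideg x_i = (1,0)`, `bideg y_j = (0,1)`. -/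
def bwt : (Fin d ⊕ Fin n) → ℕ × ℕ := Sum.elim (fun _ => (1, 0)) (fun _ => (0, 1))

/-- The `x`-degree weight. -/
def wx : (Fin d ⊕ Fin n) → ℕ := Sum.elim (fun _ => 1) (fun _ => 0)

/-- The ideal `m = (x_1,…,x_d)B`. -/
def mxB : Ideal (B k d n) := Ideal.span (Set.range fun i : Fin d => (X (Sum.inl i) : B k d n))

variable (I : Ideal (B k d n))

/-- `A = H⁰_m(S)`: elements of `S = B/I` annihilated by a power of `m`. -/
def H0 : Submodule (B k d n) (B k d n ⧸ I) :=
  ⨆ N : ℕ, Submodule.torsionBySet (B k d n) (B k d n ⧸ I)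
    ((mxB k d n ^ N : Ideal (B k d n)) : Set (B k d n))

/-- The bigraded component of `S = B/I` in bidegree `p`. -/
def Scomp (p : ℕ × ℕ) : Submodule k (B k d n ⧸ I) :=
  (weightedHomogeneousSubmodule k (bwt d n) p).map (Ideal.Quotient.mkₐ k I).toLinearMap

/-- The graded strand `S_j = ⊕_b S_{(j,b)}` of `S` in `x`-degree `j`, as a `T`-module. -/
def SxDeg (j : ℕ) : Submodule (T k n) (B k d n ⧸ I) :=
  Submodule.span (T k n) ((Ideal.Quotient.mk I) '' {g : B k d n | g.IsWeightedHomogeneous (wx d n) j})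

/-- The graded strand of `S` in (possibly negative) `x`-degree `i : ℤ`. -/
def SxDegZ (i : ℤ) : Submodule (T k n) (B k d n ⧸ I) :=
  if 0 ≤ i then SxDeg k d n I i.toNat else ⊥

/-- The graded strand `A_i = ⊕_b A_{(i,b)}` of `A = H⁰_m(S)`, as a `T`-module. -/
def AcompZ (i : ℤ) : Submodule (T k n) (B k d n ⧸ I) :=
  (H0 k d n I).restrictScalars (T k n) ⊓ SxDegZ k d n I i

/-- The graded component of `T` in (possibly negative) degree `j`. -/
def TcompZ (j : ℤ) : Submodule k (T k n) :=
  if 0 ≤ j then homogeneousSubmodule (Fin n) k j.toNat else ⊥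

/-!
Let `φ` be a functional on a free module `M`, and consider the Koszul complex of alternating forms
on `M` with values in `N`, with differential `w ↦ φ ∧ w`. If `φ c₀, …, φ cₚ₋₁` is weakly
`N`-regular, then `w ↦ w c` identifies the `p`-th cohomology with the elements of
`N / (φ c₀, …, φ cₚ₋₁)N` killed by the values of `φ`: one iterates the connecting isomorphisms of
`0 → N → N → N / φ c₀ N → 0`, which contraction with `c₀` inverts by Cartan's formula.

For `M = Bᵈ`, `N = B`, `φ = ∑ xₜ eₜ*` and `c` the columns of `𝔅`, we have `φ cᵢ = fᵢ`, and the
top-degree forms are the multiples of `det`. Surjectivity of the identification gives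
`I : m = I + (det 𝔅)`, and its injectivity gives `I : (det 𝔅) = m`, hence `det 𝔅 ∉ I`.

Modulo `I`, the ideal `I : m` is thus the `T`-span of `det 𝔅`, so it is concentrated in `x`-degree
`δ`. A homogeneous element of `x`-degree greater than `δ` killed by a power of `m` then
vanishes in `S`. Hence `m A_δ = 0`, and `A_δ` is contained in that span.
-/

section Koszul

open RingTheory.Sequence
open scoped Pointwise Matrix

variable {R M N N' : Type*} [CommRing R] [AddCommGroup M] [Module R M] [AddCommGroup N]
  [Module R N] [AddCommGroup N'] [Module R N'] {p m : ℕ}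

/-- The differential `w ↦ φ ∧ w` of the Koszul complex of a functional `φ` on `M`, with
coefficients in `N`. Its `p`-cochains are the alternating `p`-forms on `M` with values in `N`. -/
def koszulD (φ : Module.Dual R M) : M [⋀^Fin p]→ₗ[R] N →ₗ[R] M [⋀^Fin (p + 1)]→ₗ[R] N :=
  AlternatingMap.alternatizeUncurryFinLM ∘ₗ LinearMap.smulRightₗ φ

lemma koszulD_apply (φ : Module.Dual R M) (w : M [⋀^Fin p]→ₗ[R] N) (v : Fin (p + 1) → M) :
    koszulD φ w v = ∑ i : Fin (p + 1), (-1 : ℤ) ^ (i : ℕ) • φ (v i) • w (i.removeNth v) := by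
  simp [koszulD, AlternatingMap.alternatizeUncurryFin_apply]

lemma koszulD_koszulD (φ : Module.Dual R M) (w : M [⋀^Fin p]→ₗ[R] N) :
    koszulD φ (koszulD φ w) = 0 := by
  have h : LinearMap.smulRightₗ φ (koszulD φ w) = AlternatingMap.alternatizeUncurryFinLM ∘ₗ
      LinearMap.smulRightₗ φ (LinearMap.smulRightₗ φ w) := by
    ext
    simp [koszulD]
  simp only [koszulD, LinearMap.comp_apply] at h ⊢
  rw [h]
  exact AlternatingMap.alternatizeUncurryFin_alternatizeUncurryFinLM_comp_of_symmetric
    fun x y => by simp [smul_smul, mul_comm]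

lemma koszulD_compAlternatingMap (φ : Module.Dual R M) (g : N →ₗ[R] N')
    (w : M [⋀^Fin p]→ₗ[R] N) :
    koszulD φ (g.compAlternatingMap w) = g.compAlternatingMap (koszulD φ w) := by
  ext v
  simp [koszulD_apply]

lemma koszulD_vecCons (φ : Module.Dual R M) (w : M [⋀^Fin (p + 1)]→ₗ[R] N) (c : M)
    (v : Fin (p + 1) → M) :
    koszulD φ w (Matrix.vecCons c v) = φ c • w v - koszulD φ (w.curryLeft c) v := by
  have removeNth_succ (i : Fin (p + 1)) :
      i.succ.removeNth (Matrix.vecCons c v) = Matrix.vecCons c (i.removeNth v) := by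
    ext j
    cases j using Fin.cases <;> simp [Fin.removeNth]
  rw [koszulD_apply, koszulD_apply, Fin.sum_univ_succ, sub_eq_add_neg, ← Finset.sum_neg_distrib]
  simp [removeNth_succ, pow_succ]

lemma koszulD_curryLeft_of_koszulD_eq_zero {φ : Module.Dual R M} {w : M [⋀^Fin (p + 1)]→ₗ[R] N}
    (hw : koszulD φ w = 0) (c : M) : koszulD φ (w.curryLeft c) = φ c • w := by
  ext v
  simpa [hw, sub_eq_zero, eq_comm (a := φ c • w v)] using (koszulD_vecCons φ w c v).symm

lemma koszulD_vecCons_zero (φ : Module.Dual R M) (w : M [⋀^Fin 0]→ₗ[R] N) (c : M)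
    (v : Fin 0 → M) :
    koszulD φ w (Matrix.vecCons c v) = φ c • w v := by
  simp [koszulD_apply, Fin.removeNth_zero]

lemma compAlternatingMap_sub (g : N →ₗ[R] N') (w w' : M [⋀^Fin p]→ₗ[R] N) :
    g.compAlternatingMap (w - w') = g.compAlternatingMap w - g.compAlternatingMap w' :=
  map_sub (LinearMap.compAlternatingMapₗ (S := R) g) w w'

lemma exists_compAlternatingMap_eq [Module.Free R M] {g : N →ₗ[R] N'}
    (hg : Function.Surjective g) (w : M [⋀^Fin p]→ₗ[R] N') :
    ∃ u : M [⋀^Fin p]→ₗ[R] N, g.compAlternatingMap u = w := by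
  obtain ⟨u, hu⟩ := Module.projective_lifting_property g
    (exteriorPower.alternatingMapLinearEquiv w) hg
  refine ⟨exteriorPower.alternatingMapLinearEquiv.symm u,
    exteriorPower.alternatingMapLinearEquiv.injective ?_⟩
  rw [exteriorPower.alternatingMapLinearEquiv_comp, LinearEquiv.apply_symm_apply, hu]

lemma exists_smul_eq_of_compAlternatingMap_mkQ_eq_zero [Module.Free R M] {r : R}
    {w : M [⋀^Fin p]→ₗ[R] N}
    (hw : (r • (⊤ : Submodule R N)).mkQ.compAlternatingMap w = 0) :
    ∃ u : M [⋀^Fin p]→ₗ[R] N, r • u = w := by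
  have hmem (v : Fin p → M) : w v ∈ r • (⊤ : Submodule R N) :=
    (Submodule.Quotient.mk_eq_zero _).1 (DFunLike.congr_fun hw v)
  have hmul (a : N) : LinearMap.lsmul R N r a ∈ r • (⊤ : Submodule R N) :=
    Submodule.smul_mem_pointwise_smul a r ⊤ trivial
  obtain ⟨u, hu⟩ := exists_compAlternatingMap_eq (g := (LinearMap.lsmul R N r).codRestrict _ hmul)
    (fun b => by
      obtain ⟨a, -, ha⟩ := (Submodule.mem_smul_pointwise_iff_exists _ _ _).1 b.2
      exact ⟨a, Subtype.ext ha⟩) (w.codRestrict _ hmem)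
  exact ⟨u, AlternatingMap.ext fun v => congr_arg Subtype.val (DFunLike.congr_fun hu v)⟩

lemma isSMulRegular_alternatingMap {r : R} (hr : IsSMulRegular N r) :
    IsSMulRegular (M [⋀^Fin p]→ₗ[R] N) r :=
  fun _ _ h => AlternatingMap.ext fun v => hr (DFunLike.congr_fun h v)

/-- The coboundaries among the Koszul `p`-cochains of `φ` with coefficients in `N`. In degree `0`
only the zero form is one. -/
def koszulCoboundaries (φ : Module.Dual R M) (N : Type*) [AddCommGroup N] [Module R N] :
    (p : ℕ) → Submodule R (M [⋀^Fin p]→ₗ[R] N)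
  | 0 => ⊥
  | _ + 1 => LinearMap.range (koszulD φ)

lemma koszulD_eq_zero_of_mem_koszulCoboundaries {φ : Module.Dual R M} {w : M [⋀^Fin p]→ₗ[R] N}
    (hw : w ∈ koszulCoboundaries φ N p) : koszulD φ w = 0 := by
  cases p with
  | zero => rw [(Submodule.mem_bot R).1 hw, map_zero]
  | succ p =>
    obtain ⟨u, rfl⟩ := hw
    exact koszulD_koszulD φ u

lemma compAlternatingMap_mem_koszulCoboundaries {φ : Module.Dual R M} (g : N →ₗ[R] N')
    {w : M [⋀^Fin p]→ₗ[R] N} (hw : w ∈ koszulCoboundaries φ N p) :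
    g.compAlternatingMap w ∈ koszulCoboundaries φ N' p := by
  cases p with
  | zero =>
    rw [(Submodule.mem_bot R).1 hw, LinearMap.compAlternatingMap_zero]
    exact zero_mem _
  | succ p =>
    obtain ⟨u, rfl⟩ := hw
    exact ⟨g.compAlternatingMap u, koszulD_compAlternatingMap φ g u⟩

lemma exists_mem_koszulCoboundaries_compAlternatingMap_eq [Module.Free R M]
    {φ : Module.Dual R M} {g : N →ₗ[R] N'} (hg : Function.Surjective g)
    {w : M [⋀^Fin p]→ₗ[R] N'} (hw : w ∈ koszulCoboundaries φ N' p) :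
    ∃ u ∈ koszulCoboundaries φ N p, g.compAlternatingMap u = w := by
  cases p with
  | zero => exact ⟨0, zero_mem _, by rw [(Submodule.mem_bot R).1 hw]; ext; simp⟩
  | succ p =>
    obtain ⟨w, rfl⟩ := hw
    obtain ⟨u, rfl⟩ := exists_compAlternatingMap_eq hg w
    exact ⟨koszulD φ u, ⟨u, rfl⟩, (koszulD_compAlternatingMap φ g u).symm⟩

/-- Contraction with `c`, reduced modulo `φ c`. By Cartan's formula it maps cocycles to cocycles;
it inverts the connecting homomorphism of `0 → N → N → N / φ c N → 0`. -/
def contractMod (φ : Module.Dual R M) (c : M) (w : M [⋀^Fin (p + 1)]→ₗ[R] N) :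
    M [⋀^Fin p]→ₗ[R] QuotSMulTop (φ c) N :=
  (φ c • (⊤ : Submodule R N)).mkQ.compAlternatingMap (w.curryLeft c)

lemma koszulD_contractMod_eq_zero (φ : Module.Dual R M) (c : M) {w : M [⋀^Fin (p + 1)]→ₗ[R] N}
    (hw : koszulD φ w = 0) : koszulD φ (contractMod φ c w) = 0 := by
  ext v
  rw [contractMod, koszulD_compAlternatingMap, koszulD_curryLeft_of_koszulD_eq_zero hw]
  exact (Submodule.Quotient.mk_eq_zero _).2 (Submodule.smul_mem_pointwise_smul _ _ _ trivial)

lemma mem_koszulCoboundaries_of_contractMod_mem [Module.Free R M] {φ : Module.Dual R M} {c : M}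
    (hc : IsSMulRegular N (φ c)) {w : M [⋀^Fin (p + 1)]→ₗ[R] N} (hw : koszulD φ w = 0)
    (hwc : contractMod φ c w ∈ koszulCoboundaries φ (QuotSMulTop (φ c) N) p) :
    w ∈ koszulCoboundaries φ N (p + 1) := by
  obtain ⟨v, hv, hvw⟩ := exists_mem_koszulCoboundaries_compAlternatingMap_eq
    (Submodule.mkQ_surjective _) hwc
  obtain ⟨u, hu⟩ : ∃ u, φ c • u = w.curryLeft c - v := by
    refine exists_smul_eq_of_compAlternatingMap_mkQ_eq_zero ?_
    rw [compAlternatingMap_sub, hvw, contractMod, sub_self]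
  have hdu : φ c • koszulD φ u = φ c • w := by
    rw [← map_smul, hu, map_sub, koszulD_curryLeft_of_koszulD_eq_zero hw,
      koszulD_eq_zero_of_mem_koszulCoboundaries hv, sub_zero]
  exact ⟨u, isSMulRegular_alternatingMap hc hdu⟩

lemma exists_sub_contractMod_mem [Module.Free R M] {φ : Module.Dual R M} {c : M}
    (hc : IsSMulRegular N (φ c))
    (hp : LinearMap.ker (koszulD φ) ≤ koszulCoboundaries φ N p)
    {z : M [⋀^Fin p]→ₗ[R] QuotSMulTop (φ c) N} (hz : koszulD φ z = 0) :
    ∃ w : M [⋀^Fin (p + 1)]→ₗ[R] N, koszulD φ w = 0 ∧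
      z - contractMod φ c w ∈ koszulCoboundaries φ (QuotSMulTop (φ c) N) p := by
  obtain ⟨y, rfl⟩ := exists_compAlternatingMap_eq (Submodule.mkQ_surjective _) z
  obtain ⟨w, hw⟩ : ∃ w, φ c • w = koszulD φ y := by
    refine exists_smul_eq_of_compAlternatingMap_mkQ_eq_zero ?_
    rw [← koszulD_compAlternatingMap, hz]
  have hdw : koszulD φ w = 0 := (isSMulRegular_alternatingMap hc).right_eq_zero_of_smul <| by
    rw [← map_smul, hw, koszulD_koszulD]
  refine ⟨w, hdw, ?_⟩
  rw [contractMod, ← compAlternatingMap_sub]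
  refine compAlternatingMap_mem_koszulCoboundaries _ (hp ?_)
  rw [LinearMap.mem_ker, map_sub, koszulD_curryLeft_of_koszulD_eq_zero hdw, hw, sub_self]

lemma isWeaklyRegular_ofFn_comp_succ_iff {φ : Module.Dual R M} {c : Fin (m + 1) → M} :
    IsWeaklyRegular N (List.ofFn (φ ∘ c)) ↔ IsSMulRegular N (φ (c 0)) ∧
      IsWeaklyRegular (QuotSMulTop (φ (c 0)) N) (List.ofFn (φ ∘ Fin.tail c)) := by
  rw [List.ofFn_succ, isWeaklyRegular_cons_iff]
  rfl

lemma ker_koszulD_le_koszulCoboundaries [Module.Free R M] {φ : Module.Dual R M} {c : Fin m → M}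
    (hc : IsWeaklyRegular N (List.ofFn (φ ∘ c))) (hpm : p < m) :
    LinearMap.ker (koszulD φ) ≤ koszulCoboundaries φ N p := by
  induction m generalizing N p with
  | zero => omega
  | succ m ih =>
    rw [isWeaklyRegular_ofFn_comp_succ_iff] at hc
    intro w hw
    cases p with
    | zero =>
      refine (Submodule.mem_bot R).2 (AlternatingMap.ext fun v => ?_)
      refine hc.1.right_eq_zero_of_smul ?_
      simpa [koszulD_vecCons_zero] using DFunLike.congr_fun hw (Matrix.vecCons (c 0) v)
    | succ p =>
      exact mem_koszulCoboundaries_of_contractMod_mem hc.1 hw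
        (ih hc.2 (by omega) (koszulD_contractMod_eq_zero φ (c 0) hw))

lemma mkQ_mem_span_range_tail_smul_top_iff {φ : Module.Dual R M} {c : Fin (p + 1) → M} {a : N} :
    (φ (c 0) • (⊤ : Submodule R N)).mkQ a ∈ Ideal.span (Set.range (φ ∘ Fin.tail c)) •
        (⊤ : Submodule R (QuotSMulTop (φ (c 0)) N)) ↔
      a ∈ Ideal.span (Set.range (φ ∘ c)) • (⊤ : Submodule R N) := by
  rw [← Submodule.range_mkQ, ← Submodule.map_top, ← Submodule.map_smul'', ← Submodule.mem_comap,
    Submodule.comap_map_mkQ, Fin.range_fin_succ, Ideal.span_insert, Submodule.sup_smul,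
    Submodule.ideal_span_singleton_smul]
  rfl

lemma contractMod_apply_tail (φ : Module.Dual R M) (w : M [⋀^Fin (p + 1)]→ₗ[R] N)
    (c : Fin (p + 1) → M) :
    contractMod φ (c 0) w (Fin.tail c) = (φ (c 0) • (⊤ : Submodule R N)).mkQ (w c) :=
  congr_arg (fun v => Submodule.mkQ _ (w v)) (Fin.cons_self_tail c)

lemma koszulD_apply_mem (φ : Module.Dual R M) (w : M [⋀^Fin p]→ₗ[R] N) (c : Fin (p + 1) → M) :
    koszulD φ w c ∈ Ideal.span (Set.range (φ ∘ c)) • (⊤ : Submodule R N) := by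
  rw [koszulD_apply]
  refine sum_mem fun i _ => zsmul_mem (Submodule.smul_mem_smul ?_ Submodule.mem_top) _
  exact Ideal.subset_span ⟨i, rfl⟩

lemma apply_mem_of_mem_koszulCoboundaries {φ : Module.Dual R M} {w : M [⋀^Fin p]→ₗ[R] N}
    (hw : w ∈ koszulCoboundaries φ N p) (c : Fin p → M) :
    w c ∈ Ideal.span (Set.range (φ ∘ c)) • (⊤ : Submodule R N) := by
  cases p with
  | zero => simp [(Submodule.mem_bot R).1 hw]
  | succ p =>
    obtain ⟨u, rfl⟩ := hw
    exact koszulD_apply_mem φ u c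

lemma mem_koszulCoboundaries_of_apply_mem [Module.Free R M] {φ : Module.Dual R M} {c : Fin p → M}
    (hc : IsWeaklyRegular N (List.ofFn (φ ∘ c))) {w : M [⋀^Fin p]→ₗ[R] N}
    (hw : koszulD φ w = 0)
    (hwc : w c ∈ Ideal.span (Set.range (φ ∘ c)) • (⊤ : Submodule R N)) :
    w ∈ koszulCoboundaries φ N p := by
  induction p generalizing N with
  | zero =>
    refine (Submodule.mem_bot R).2 (AlternatingMap.ext fun v => ?_)
    simpa [Subsingleton.elim v c] using hwc
  | succ p ih =>
    rw [isWeaklyRegular_ofFn_comp_succ_iff] at hc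
    refine mem_koszulCoboundaries_of_contractMod_mem hc.1 hw
      (ih hc.2 (koszulD_contractMod_eq_zero φ (c 0) hw) ?_)
    rwa [contractMod_apply_tail, mkQ_mem_span_range_tail_smul_top_iff]

lemma exists_cocycle_sub_apply_mem [Module.Free R M] {φ : Module.Dual R M} {c : Fin p → M}
    (hc : IsWeaklyRegular N (List.ofFn (φ ∘ c))) {a : N}
    (ha : ∀ v, φ v • a ∈ Ideal.span (Set.range (φ ∘ c)) • (⊤ : Submodule R N)) :
    ∃ w : M [⋀^Fin p]→ₗ[R] N, koszulD φ w = 0 ∧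
      a - w c ∈ Ideal.span (Set.range (φ ∘ c)) • (⊤ : Submodule R N) := by
  induction p generalizing N with
  | zero =>
    refine ⟨AlternatingMap.constOfIsEmpty R M (Fin 0) a, ?_, by simp⟩
    ext v
    simpa [koszulD_apply] using ha (v 0)
  | succ p ih =>
    have hker := ker_koszulD_le_koszulCoboundaries hc p.lt_succ_self
    rw [isWeaklyRegular_ofFn_comp_succ_iff] at hc
    obtain ⟨z, hz, haz⟩ := ih hc.2 (a := (φ (c 0) • (⊤ : Submodule R N)).mkQ a)
      fun v => by rw [← map_smul, mkQ_mem_span_range_tail_smul_top_iff]; exact ha v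
    obtain ⟨w, hw, hzw⟩ := exists_sub_contractMod_mem hc.1 hker hz
    refine ⟨w, hw, mkQ_mem_span_range_tail_smul_top_iff.1 ?_⟩
    rw [map_sub, ← contractMod_apply_tail]
    simpa using add_mem haz (apply_mem_of_mem_koszulCoboundaries hzw (Fin.tail c))

lemma detRowAlternating_col (C : Matrix (Fin p) (Fin p) R) :
    Matrix.detRowAlternating C.col = C.det :=
  C.det_transpose

lemma detRowAlternating_basisFun :
    Matrix.detRowAlternating (Pi.basisFun R (Fin p)) = 1 := by
  simpa only [Pi.basisFun_det] using (Pi.basisFun R (Fin p)).det_self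

lemma apply_col_eq_mul_det (w : (Fin p → R) [⋀^Fin p]→ₗ[R] R) (C : Matrix (Fin p) (Fin p) R) :
    w C.col = w (Pi.basisFun R (Fin p)) * C.det := by
  conv_lhs => rw [w.eq_smul_basis_det (Pi.basisFun R (Fin p))]
  rw [Pi.basisFun_det, AlternatingMap.smul_apply, detRowAlternating_col, smul_eq_mul]

lemma koszulD_eq_zero_of_top (φ : Module.Dual R (Fin p → R)) (w : (Fin p → R) [⋀^Fin p]→ₗ[R] N) :
    koszulD φ w = 0 :=
  Module.Basis.ext_alternating (Pi.basisFun R (Fin p)) fun v hv =>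
    absurd (Fintype.card_le_of_injective v hv) (by simp)

lemma linearCombination_comp_col (x : Fin p → R) (C : Matrix (Fin p) (Fin p) R) :
    Fintype.linearCombination R x ∘ C.col = x ᵥ* C := by
  ext i
  simp [Fintype.linearCombination_apply, Matrix.vecMul, dotProduct, mul_comm]

lemma linearCombination_comp_basisFun (x : Fin p → R) :
    Fintype.linearCombination R x ∘ Pi.basisFun R (Fin p) = x := by
  ext i
  simp

lemma span_range_le_colon_det (x : Fin p → R) (C : Matrix (Fin p) (Fin p) R) :
    Ideal.span (Set.range x) ≤ (Ideal.span (Set.range (x ᵥ* C))).colon {C.det} := by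
  rw [Ideal.span_le]
  rintro _ ⟨t, rfl⟩
  have hadj : (x ᵥ* C ᵥ* C.adjugate) t = C.det * x t := by
    rw [Matrix.vecMul_vecMul, C.mul_adjugate, Matrix.vecMul_smul, Matrix.vecMul_one]
    rfl
  rw [SetLike.mem_coe, Submodule.mem_colon_singleton, smul_eq_mul, mul_comm, ← hadj]
  change ∑ i, (x ᵥ* C) i * C.adjugate i t ∈ _
  exact sum_mem fun i _ => Ideal.mul_mem_right _ _ (Ideal.subset_span (Set.mem_range_self i))

theorem colon_span_range_eq_sup_span_det {x : Fin p → R} {C : Matrix (Fin p) (Fin p) R}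
    (hC : IsWeaklyRegular R (List.ofFn (x ᵥ* C))) :
    (Ideal.span (Set.range (x ᵥ* C))).colon (Ideal.span (Set.range x)) =
      Ideal.span (Set.range (x ᵥ* C)) ⊔ Ideal.span {C.det} := by
  refine le_antisymm (fun a ha => ?_) (sup_le Ideal.le_colon ?_)
  · rw [← linearCombination_comp_col] at hC ha ⊢
    obtain ⟨w, -, hw⟩ := exists_cocycle_sub_apply_mem hC (a := a) fun v => by
      simpa [mul_comm] using Submodule.mem_colon.1 ha _
        ((Fintype.range_linearCombination R x).le ⟨v, rfl⟩)
    rw [smul_eq_mul, Ideal.mul_top, apply_col_eq_mul_det] at hw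
    rw [← sub_add_cancel a (w (Pi.basisFun R (Fin p)) * C.det)]
    exact Submodule.add_mem_sup hw (Ideal.mul_mem_left _ _ (Ideal.mem_span_singleton_self _))
  · rw [Ideal.span_singleton_le_iff_mem, Submodule.mem_colon]
    intro y hy
    simpa [mul_comm] using Submodule.mem_colon_singleton.1 (span_range_le_colon_det x C hy)

theorem colon_det_eq_span_range {x : Fin p → R} {C : Matrix (Fin p) (Fin p) R}
    (hC : IsWeaklyRegular R (List.ofFn (x ᵥ* C))) :
    (Ideal.span (Set.range (x ᵥ* C))).colon {C.det} = Ideal.span (Set.range x) := by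
  refine le_antisymm (fun a ha => ?_) (span_range_le_colon_det x C)
  rw [Submodule.mem_colon_singleton, ← linearCombination_comp_col] at ha
  rw [← linearCombination_comp_col] at hC
  have hmem := mem_koszulCoboundaries_of_apply_mem hC
    (w := a • Matrix.detRowAlternating) (koszulD_eq_zero_of_top _ _)
    (by simpa [detRowAlternating_col] using ha)
  simpa [linearCombination_comp_basisFun, detRowAlternating_basisFun] using
    apply_mem_of_mem_koszulCoboundaries hmem (Pi.basisFun R (Fin p))

end Koszul

section Graded

lemma isWeightedHomogeneous_det {σ A W ι : Type*} [CommRing A] [AddCommMonoid W] [Fintype ι]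
    [DecidableEq ι] {w : σ → W} {C : Matrix ι ι (MvPolynomial σ A)} {e : ι → W}
    (hC : ∀ t i, (C t i).IsWeightedHomogeneous w (e i)) :
    C.det.IsWeightedHomogeneous w (∑ i, e i) := by
  rw [Matrix.det_apply]
  refine IsWeightedHomogeneous.sum _ _ _ fun π _ => ?_
  rw [← mem_weightedHomogeneousSubmodule, Units.smul_def]
  exact zsmul_mem (IsWeightedHomogeneous.prod _ _ _ fun i _ => hC _ i) _

lemma isWeightedHomogeneous_map_weight {σ A W W' : Type*} [CommSemiring A] [AddCommMonoid W]
    [AddCommMonoid W'] {w : σ → W} {g : MvPolynomial σ A} {a : W}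
    (hg : g.IsWeightedHomogeneous w a) (h : W →+ W') :
    g.IsWeightedHomogeneous (h ∘ w) (h a) := fun s hs => by
  rw [← hg hs, Finsupp.weight_apply, Finsupp.weight_apply, map_finsuppSum]
  simp

lemma isWeightedHomogeneous_rename {σ σ' A W : Type*} [CommSemiring A] [AddCommMonoid W]
    {w : σ' → W} {e : σ → σ'} {g : MvPolynomial σ A} {a : W}
    (hg : g.IsWeightedHomogeneous (w ∘ e) a) : (rename e g).IsWeightedHomogeneous w a := by
  intro s hs
  obtain ⟨u, rfl, hu⟩ := coeff_rename_ne_zero e g s hs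
  rw [← hg hu]
  exact Finsupp.linearCombination_mapDomain ℕ e u

lemma mul_mem_colon_pow {R : Type*} [CommRing R] {I J : Ideal R} {N : ℕ} {g u : R}
    (hg : g ∈ I.colon (J ^ (N + 1) : Ideal R)) (hu : u ∈ J) :
    u * g ∈ I.colon (J ^ N : Ideal R) := by
  rw [Submodule.mem_colon] at hg ⊢
  intro s hs
  rw [smul_eq_mul, mul_comm u, mul_assoc]
  exact hg (u * s) (pow_succ' J N ▸ Ideal.mul_mem_mul hu hs)

lemma mxB_ne_top : mxB k d n ≠ ⊤ := by
  have h : mxB k d n ≤ RingHom.ker (constantCoeff (σ := Fin d ⊕ Fin n) (R := k)) := by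
    rw [mxB, Ideal.span_le]
    rintro _ ⟨i, rfl⟩
    simp
  exact ne_top_of_le_ne_top (RingHom.ker_ne_top _) h

variable {k d n}

lemma isWeightedHomogeneous_wx_of_bwt {g : B k d n} {a b : ℕ}
    (hg : g ∈ weightedHomogeneousSubmodule k (bwt d n) (a, b)) :
    g.IsWeightedHomogeneous (wx d n) a := by
  have h : wx d n = AddMonoidHom.fst ℕ ℕ ∘ bwt d n := by
    ext (i | j) <;> rfl
  exact h ▸ isWeightedHomogeneous_map_weight hg (AddMonoidHom.fst ℕ ℕ)

lemma isWeightedHomogeneous_rename_inr_mul {g : B k d n} {i : ℕ} (c : T k n)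
    (hg : g.IsWeightedHomogeneous (wx d n) i) :
    (rename Sum.inr c * g).IsWeightedHomogeneous (wx d n) i := by
  have hc : c.IsWeightedHomogeneous (wx d n ∘ Sum.inr) 0 := fun s _ => by
    simp [Finsupp.weight_apply, wx]
  simpa using (isWeightedHomogeneous_rename hc).mul hg

lemma X_inl_mem_mxB (t : Fin d) : (X (Sum.inl t) : B k d n) ∈ mxB k d n :=
  Ideal.subset_span ⟨t, rfl⟩

lemma exists_sub_rename_mem_mxB (b : B k d n) : ∃ c : T k n, b - rename Sum.inr c ∈ mxB k d n := by
  induction b using MvPolynomial.induction_on with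
  | C a => exact ⟨C a, by simp⟩
  | add a b ha hb =>
    obtain ⟨c, hc⟩ := ha
    obtain ⟨e, he⟩ := hb
    exact ⟨c + e, by simpa [add_sub_add_comm] using add_mem hc he⟩
  | mul_X a i ha =>
    obtain ⟨c, hc⟩ := ha
    cases i with
    | inl t => exact ⟨0, by simpa using Ideal.mul_mem_left _ a (X_inl_mem_mxB t)⟩
    | inr j => exact ⟨c * X j, by simpa [← sub_mul] using Ideal.mul_mem_right _ _ hc⟩

variable {I}

lemma mem_colon_mxB_iff {g : B k d n} :
    g ∈ I.colon (mxB k d n) ↔ ∀ t, X (Sum.inl t) * g ∈ I := by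
  rw [mxB, Ideal.colon_span, Submodule.mem_colon, Set.forall_mem_range]
  simp only [smul_eq_mul, mul_comm g]

lemma mk_mem_H0_iff {g : B k d n} :
    Ideal.Quotient.mk I g ∈ H0 k d n I ↔
      ∃ N : ℕ, g ∈ I.colon (mxB k d n ^ N : Ideal (B k d n)) := by
  rw [H0, Submodule.mem_iSup_of_directed _ (Monotone.directed_le fun a b hab =>
    Submodule.torsionBySet_le_torsionBySet_of_subset (Ideal.pow_le_pow_right hab))]
  refine exists_congr fun N => ?_
  rw [Submodule.mem_torsionBySet_iff, Submodule.mem_colon, SetCoe.forall]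
  refine forall₂_congr fun u _ => ?_
  rw [smul_eq_mul, mul_comm, ← Ideal.Quotient.eq_zero_iff_mem]
  rfl

lemma smul_mk (c : T k n) (g : B k d n) :
    c • Ideal.Quotient.mk I g = Ideal.Quotient.mk I (rename Sum.inr c * g) := rfl

lemma mem_SxDeg_iff {j : ℕ} {z : B k d n ⧸ I} :
    z ∈ SxDeg k d n I j ↔
      ∃ g : B k d n, g.IsWeightedHomogeneous (wx d n) j ∧ Ideal.Quotient.mk I g = z := by
  refine ⟨fun hz => ?_, fun ⟨g, hg, hz⟩ => Submodule.subset_span ⟨g, hg, hz⟩⟩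
  induction hz using Submodule.span_induction with
  | mem _ h => exact h
  | zero => exact ⟨0, isWeightedHomogeneous_zero _ _ _, map_zero _⟩
  | add a b _ _ ha hb =>
    obtain ⟨g, hg, rfl⟩ := ha
    obtain ⟨g', hg', rfl⟩ := hb
    exact ⟨g + g', hg.add hg', map_add _ _ _⟩
  | smul c a _ ha =>
    obtain ⟨g, hg, rfl⟩ := ha
    exact ⟨_, isWeightedHomogeneous_rename_inr_mul c hg, (smul_mk c g).symm⟩

lemma weightedHomogeneousComponent_mem_span_range {ι : Type*} {f : ι → B k d n} {α : ι → ℕ}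
    (hf : ∀ i, (f i).IsWeightedHomogeneous (wx d n) (α i)) {g : B k d n}
    (hg : g ∈ Ideal.span (Set.range f)) (j : ℕ) :
    weightedHomogeneousComponent (wx d n) j g ∈ Ideal.span (Set.range f) := by
  let := MvPolynomial.weightedGradedAlgebra k (wx d n)
  refine weightedHomogeneousComponent_mem_of_mem k (wx d n) (Ideal.homogeneous_span _ _ ?_) hg j
  rintro _ ⟨i, rfl⟩
  exact ⟨α i, hf i⟩

lemma exists_sub_rename_mul_mem {D g : B k d n} (hI : I.colon (mxB k d n) = I ⊔ Ideal.span {D})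
    (hg : g ∈ I.colon (mxB k d n)) : ∃ c : T k n, g - rename Sum.inr c * D ∈ I := by
  have hD : D ∈ I.colon (mxB k d n) :=
    hI ▸ Ideal.mem_sup_right (Ideal.mem_span_singleton_self D)
  obtain ⟨y, hy, z, hz, rfl⟩ := Submodule.mem_sup.1 (hI ▸ hg)
  obtain ⟨b, rfl⟩ := Ideal.mem_span_singleton'.1 hz
  obtain ⟨c, hc⟩ := exists_sub_rename_mem_mxB b
  refine ⟨c, ?_⟩
  rw [add_sub_assoc, ← sub_mul, mul_comm]
  exact I.add_mem hy (Submodule.mem_colon.1 hD _ hc)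

variable {D : B k d n} {δ : ℕ}

lemma mem_of_mem_colon_mxB
    (hIhom : ∀ g ∈ I, ∀ i, weightedHomogeneousComponent (wx d n) i g ∈ I)
    (hI : I.colon (mxB k d n) = I ⊔ Ideal.span {D}) (hD : D.IsWeightedHomogeneous (wx d n) δ)
    {g : B k d n} {i : ℕ} (hi : i ≠ δ) (hg : g.IsWeightedHomogeneous (wx d n) i)
    (hgI : g ∈ I.colon (mxB k d n)) : g ∈ I := by
  obtain ⟨c, hc⟩ := exists_sub_rename_mul_mem hI hgI
  simpa [hg.weightedHomogeneousComponent_same,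
    (isWeightedHomogeneous_rename_inr_mul c hD).weightedHomogeneousComponent_ne i hi]
    using hIhom _ hc i

lemma mem_of_mem_colon_mxB_pow
    (hIhom : ∀ g ∈ I, ∀ i, weightedHomogeneousComponent (wx d n) i g ∈ I)
    (hI : I.colon (mxB k d n) = I ⊔ Ideal.span {D}) (hD : D.IsWeightedHomogeneous (wx d n) δ)
    {N : ℕ} {g : B k d n} {i : ℕ} (hi : δ < i) (hg : g.IsWeightedHomogeneous (wx d n) i)
    (hgI : g ∈ I.colon (mxB k d n ^ N : Ideal (B k d n))) : g ∈ I := by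
  induction N generalizing g i with
  | zero => simpa using Submodule.mem_colon.1 hgI 1 (by simp)
  | succ N ih =>
    refine mem_of_mem_colon_mxB hIhom hI hD hi.ne' hg (mem_colon_mxB_iff.2 fun t => ?_)
    exact ih (by omega) ((isWeightedHomogeneous_X k (wx d n) (Sum.inl t)).mul hg)
      (mul_mem_colon_pow hgI (X_inl_mem_mxB t))

theorem AcompZ_eq_span_singleton
    (hIhom : ∀ g ∈ I, ∀ i, weightedHomogeneousComponent (wx d n) i g ∈ I)
    (hI : I.colon (mxB k d n) = I ⊔ Ideal.span {D}) (hD : D.IsWeightedHomogeneous (wx d n) δ) :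
    AcompZ k d n I δ = Submodule.span (T k n) {Ideal.Quotient.mk I D} := by
  have hDI : D ∈ I.colon (mxB k d n) :=
    hI ▸ Ideal.mem_sup_right (Ideal.mem_span_singleton_self D)
  have hstrand : SxDegZ k d n I δ = SxDeg k d n I δ := by simp [SxDegZ]
  rw [AcompZ, hstrand]
  refine le_antisymm ?_ ?_
  · rintro z ⟨hzH, hzδ⟩
    obtain ⟨g, hg, rfl⟩ := mem_SxDeg_iff.1 hzδ
    obtain ⟨N, hN⟩ := mk_mem_H0_iff.1 hzH
    have hsocle : g ∈ I.colon (mxB k d n) := mem_colon_mxB_iff.2 fun t =>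
      mem_of_mem_colon_mxB_pow hIhom hI hD (show δ < 1 + δ by omega)
        ((isWeightedHomogeneous_X k (wx d n) (Sum.inl t)).mul hg) (Ideal.mul_mem_left _ _ hN)
    obtain ⟨c, hc⟩ := exists_sub_rename_mul_mem hI hsocle
    exact Submodule.mem_span_singleton.2
      ⟨c, (smul_mk c D).trans (Ideal.Quotient.eq.2 hc).symm⟩
  · rw [Submodule.span_singleton_le_iff_mem]
    exact ⟨mk_mem_H0_iff.2 ⟨1, by rwa [pow_one]⟩, mem_SxDeg_iff.2 ⟨D, hD, rfl⟩⟩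

end Graded

/-- `det 𝔅 ∉ I`; `det 𝔅` is a bihomogeneous form of bidegree `(δ,τ)`;
`I : (x_1,…,x_d) = I + (det 𝔅)`; and the `T`-module `A_δ` is generated by the image of
`det 𝔅` in `S = B/I`. -/
theorem Adelta_generator
    (f : Fin d → B k d n) (α β : Fin d → ℕ)
    (hfm : ∀ i, f i ∈ mxB k d n)
    (hreg : RingTheory.Sequence.IsRegular (B k d n) (List.ofFn f))
    (hbihom : ∀ i, f i ∈ weightedHomogeneousSubmodule k (bwt d n) (α i, β i))
    (hne : ∀ i, f i ≠ 0) (hα : ∀ i, 1 ≤ α i)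
    (hI : I = Ideal.span (Set.range f))
    (δ τ : ℕ) (hδ : (∑ i, α i) = δ + d) (hτ : τ = ∑ i, β i)
    (𝔅 : Matrix (Fin d) (Fin d) (B k d n))
    (h𝔅hom : ∀ t i, 𝔅 t i ∈ weightedHomogeneousSubmodule k (bwt d n) (α i - 1, β i))
    (h𝔅 : ∀ i, f i = ∑ t, X (Sum.inl t) * 𝔅 t i) :
    𝔅.det ∉ I ∧
    𝔅.det ∈ weightedHomogeneousSubmodule k (bwt d n) (δ, τ) ∧
    (I : Submodule (B k d n) (B k d n)).colon (mxB k d n) = I ⊔ Ideal.span {𝔅.det} ∧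
    AcompZ k d n I (δ : ℤ) =
      Submodule.span (T k n) {(Ideal.Quotient.mk I) 𝔅.det} := by
  subst hI
  have hf : f = Matrix.vecMul (fun t => X (Sum.inl t)) 𝔅 := by
    ext1 i
    simp [h𝔅, Matrix.vecMul, dotProduct]
  have hdet : 𝔅.det.IsWeightedHomogeneous (bwt d n) (δ, τ) := by
    have hdeg : ∑ i, (α i - 1, β i) = (δ, τ) := by
      ext <;> simp [Prod.fst_sum, Prod.snd_sum, Finset.sum_tsub_distrib _ fun i _ => hα i, hδ, hτ]
    exact hdeg ▸ isWeightedHomogeneous_det h𝔅hom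
  have hweak := hf ▸ hreg.toIsWeaklyRegular
  have hcolon : (Ideal.span (Set.range f)).colon (mxB k d n) =
      Ideal.span (Set.range f) ⊔ Ideal.span {𝔅.det} :=
    hf ▸ colon_span_range_eq_sup_span_det hweak
  have hcolon_det : (Ideal.span (Set.range f)).colon {𝔅.det} = mxB k d n :=
    hf ▸ colon_det_eq_span_range hweak
  refine ⟨fun hmem => mxB_ne_top k d n ?_, hdet, hcolon, AcompZ_eq_span_singleton
    (fun g hg => weightedHomogeneousComponent_mem_span_range
      (fun i => isWeightedHomogeneous_wx_of_bwt (hbihom i)) hg)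
    hcolon (isWeightedHomogeneous_wx_of_bwt hdet)⟩
  rw [← hcolon_det, Submodule.colon_eq_top_iff_subset]
  simpa using hmem

end Stmt4
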